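/- For n ≥ 3, the minimal size of a generating set of the monoid RP_n is exactly 5; that is, rank(RP_n) = 5. -/

import Mathlib

/-!
**Lower bound.**  A rook partition can fail to be a permutation on its upper row in three ways:
it may have an upper rook dot (`TopDot`), two upper points that are indistinguishable
(`TopPair`), or a block of upper points only (`TopBlock`).  Each of these defects survives right
multiplication by anything and left multiplication by a permutation, and a partition with none
of them is a permutation (`isPermDiag_of_no_defect`).  Hence the first non-permutation letter of
a word has only defects of the product, and at least one (`exists_gen_defects'`).  As `ō_i`,
`t̄_ij`, `ē_i` have exactly one defect each, of three different kinds, every generating set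
contains three distinct non-permutations.  Factors of a permutation are permutations
(`isPermDiag_of_mul`), so the permutations in a generating set generate the non-commutative
group `S_n`, and there are at least two of them.

**Upper bound.**  A transposition and a long cycle generate `S_n`; conjugation then yields every
`ē_i`, `ō_i`, `t̄_ij`.  Multiplication by these on the left or right isolates a point (`iso`),
turns a block into rook dots (`kill`), or unites two blocks meeting the same row (`merge`).
Any rook partition is built from a permutation by such moves (`mem_of_ops`): isolate points to
leave one upper and one lower representative of each transversal block, merge the remaining
points into their blocks, and kill the singletons that are to become dots.  Right-hand
multiplications reduce to left-hand ones by the reflection `flip`.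
-/


namespace RookPaper

/-- Reflexive–symmetric–transitive closure of a relation
(connectivity by paths in a graph). -/
inductive RClosure {V : Type*} (E : V → V → Prop) : V → V → Prop
  | base {x y : V} : E x y → RClosure E x y
  | refl (x : V) : RClosure E x x
  | symm {x y : V} : RClosure E x y → RClosure E y x
  | trans {x y z : V} : RClosure E x y → RClosure E y z → RClosure E x z

/-- The 2n points `1,…,n` (`Sum.inl`) and `1',…,n'` (`Sum.inr`). -/
abbrev Pt (n : ℕ) := Fin n ⊕ Fin n

/-- A rook partition of degree `n`, encoded as a partial equivalence relation on the
`2n` points: its blocks are the equivalence classes of `rel`, and the rook dots are the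
points `x` with `¬ rel x x`. -/
structure RP (n : ℕ) where
  rel : Pt n → Pt n → Prop
  symm : ∀ {x y : Pt n}, rel x y → rel y x
  trans : ∀ {x y z : Pt n}, rel x y → rel y z → rel x z

/-- The underlying index in `[n]` of a point (`i` and `i'` both have index `i`). -/
def idx {n : ℕ} : Pt n → Fin n := Sum.elim id id

/-- For `A ⊆ [n]`, the corresponding set of upper points. -/
def upSet {n : ℕ} (A : Set (Fin n)) : Set (Pt n) := Sum.inl '' A

/-- For `B ⊆ [n]`, the set `B' = {b' : b ∈ B}` of lower points. -/
def dnSet {n : ℕ} (B : Set (Fin n)) : Set (Pt n) := Sum.inr '' B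

/-- `x` is a rook dot of `α`. -/
def RP.IsRookDot {n : ℕ} (α : RP n) (x : Pt n) : Prop := ¬ α.rel x x

/-- `α` has no rook dots, i.e. `α` lies in the partition monoid `P_n`. -/
def RP.NoDots {n : ℕ} (α : RP n) : Prop := ∀ x, α.rel x x

/-- `B` is a block of `α`. -/
def RP.IsBlock {n : ℕ} (α : RP n) (B : Set (Pt n)) : Prop :=
  ∃ x, α.rel x x ∧ B = {y | α.rel x y}

/-- The identity rook partition, with blocks `{i,i'}`. -/
instance {n : ℕ} : One (RP n) :=
  ⟨{ rel := fun x y => idx x = idx y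
     symm := fun h => Eq.symm h
     trans := fun h h' => Eq.trans h h' }⟩

/-! The product graph `Γ(α,β)` lives on three rows of `n` vertices. -/

abbrev V3 (n : ℕ) := Fin n ⊕ Pt n

def vTop {n : ℕ} (i : Fin n) : V3 n := Sum.inl i
def vMid {n : ℕ} (i : Fin n) : V3 n := Sum.inr (Sum.inl i)
def vBot {n : ℕ} (i : Fin n) : V3 n := Sum.inr (Sum.inr i)

/-- `α` occupies the top and middle rows. -/
def embA {n : ℕ} : Pt n → V3 n := Sum.elim vTop vMid
/-- `β` occupies the middle and bottom rows. -/
def embB {n : ℕ} : Pt n → V3 n := Sum.elim vMid vBot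
/-- The product `αβ` lives on the top and bottom rows. -/
def embOut {n : ℕ} : Pt n → V3 n := Sum.elim vTop vBot

/-- The edges of the product graph `Γ(α,β)`. -/
def pgEdge {n : ℕ} (α β : RP n) (x y : V3 n) : Prop :=
  (∃ a b : Pt n, α.rel a b ∧ x = embA a ∧ y = embA b) ∨
  (∃ a b : Pt n, β.rel a b ∧ x = embB a ∧ y = embB b)

/-- Connectivity (by a possibly empty path) in the product graph `Γ(α,β)`. -/
def pgConn {n : ℕ} (α β : RP n) : V3 n → V3 n → Prop :=
  RClosure (pgEdge α β)

/-- The white vertices of `Γ(α,β)`: a top vertex is white if it is a rook dot of `α`,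
a bottom vertex is white if it is a rook dot of `β`, and a middle vertex is white if it is
a rook dot of `α` (as a lower point) or of `β` (as an upper point). -/
def pgWhite {n : ℕ} (α β : RP n) (v : V3 n) : Prop :=
  (∃ i, v = vTop i ∧ ¬ α.rel (Sum.inl i) (Sum.inl i)) ∨
  (∃ i, v = vMid i ∧ (¬ α.rel (Sum.inr i) (Sum.inr i) ∨ ¬ β.rel (Sum.inl i) (Sum.inl i))) ∨
  (∃ i, v = vBot i ∧ ¬ β.rel (Sum.inr i) (Sum.inr i))

/-- The product of two rook partitions: a point of `αβ` is a rook dot iff it is connected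
to a white vertex of `Γ(α,β)`, and two points are in the same block of `αβ` iff they are
connected in `Γ(α,β)` (and are not rook dots). -/
instance {n : ℕ} : Mul (RP n) :=
  ⟨fun α β =>
    { rel := fun x y =>
        pgConn α β (embOut x) (embOut y) ∧
          ∀ w, pgWhite α β w → ¬ pgConn α β (embOut x) w
      symm := by
        intro x y h
        exact ⟨RClosure.symm h.1, fun w hw hc => h.2 w hw (RClosure.trans h.1 hc)⟩
      trans := by
        intro x y z h h'
        exact ⟨RClosure.trans h.1 h'.1, h.2⟩ }⟩

/-- The rook partition corresponding to a permutation `σ`: blocks `{i, (σ i)'}`. -/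
def permRP {n : ℕ} (σ : Equiv.Perm (Fin n)) : RP n where
  rel x y := Sum.elim (fun i => σ i) (fun i => i) x = Sum.elim (fun i => σ i) (fun i => i) y
  symm := fun h => Eq.symm h
  trans := fun h h' => Eq.trans h h'

/-- `α` lies in the copy of the symmetric group `S_n` inside `RP_n`. -/
def RP.IsPermDiag {n : ℕ} (α : RP n) : Prop := ∃ σ : Equiv.Perm (Fin n), α = permRP σ

/-- The generator `ē_i` : blocks `{j,j'}` for `j ≠ i`, and singleton blocks `{i}`, `{i'}`. -/
def ebar {n : ℕ} (i : Fin n) : RP n where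
  rel x y := x = y ∨ (idx x = idx y ∧ idx x ≠ i)
  symm := by
    rintro x y (rfl | ⟨h1, h2⟩)
    · exact Or.inl rfl
    · exact Or.inr ⟨h1.symm, h1 ▸ h2⟩
  trans := by
    rintro x y z (rfl | ⟨h1, h2⟩) h
    · exact h
    · rcases h with rfl | ⟨h3, h4⟩
      · exact Or.inr ⟨h1, h2⟩
      · exact Or.inr ⟨h1.trans h3, h2⟩

/-- The generator `t̄_ij` (for `i ≠ j`): blocks `{k,k'}` for `k ∉ {i,j}`, and `{i,j,i',j'}`. -/
def tbar {n : ℕ} (i j : Fin n) : RP n where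
  rel x y := idx x = idx y ∨ ((idx x = i ∨ idx x = j) ∧ (idx y = i ∨ idx y = j))
  symm := by
    rintro x y (h | ⟨h1, h2⟩)
    · exact Or.inl h.symm
    · exact Or.inr ⟨h2, h1⟩
  trans := by
    rintro x y z hxy hyz
    rcases hxy with h | ⟨h1, h2⟩
    · rcases hyz with h' | ⟨h3, h4⟩
      · exact Or.inl (h.trans h')
      · refine Or.inr ⟨?_, h4⟩
        rw [h]; exact h3
    · rcases hyz with h' | ⟨h3, h4⟩
      · refine Or.inr ⟨h1, ?_⟩
        rw [← h']; exact h2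
      · exact Or.inr ⟨h1, h4⟩

/-- `ō_A` for a subset `A ⊆ [n]`: rook dots at all points of `A ∪ A'`, blocks `{j,j'}` for
`j ∉ A`. -/
def obarS {n : ℕ} (A : Set (Fin n)) : RP n where
  rel x y := idx x = idx y ∧ idx x ∉ A
  symm := by
    rintro x y ⟨h1, h2⟩
    exact ⟨h1.symm, h1 ▸ h2⟩
  trans := by
    rintro x y z ⟨h1, h2⟩ ⟨h3, h4⟩
    exact ⟨h1.trans h3, h2⟩

/-- The generator `ō_i`: rook dots `i` and `i'`, blocks `{j,j'}` for `j ≠ i`. -/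
def obar {n : ℕ} (i : Fin n) : RP n := obarS {i}

/-- For an index `i` of a simple transposition (`1 ≤ i ≤ n-1`, zero-based `Fin (n-1)`),
the smaller of the two swapped points. -/
def lo {n : ℕ} (i : Fin (n - 1)) : Fin n := ⟨i.val, by have := i.isLt; omega⟩
/-- The larger of the two swapped points. -/
def hi {n : ℕ} (i : Fin (n - 1)) : Fin n := ⟨i.val + 1, by have := i.isLt; omega⟩

/-- The generator `s̄_i`: the simple transposition with blocks `{i,(i+1)'}`, `{i+1,i'}`,
and `{j,j'}` for other `j`. -/
def sbar {n : ℕ} (i : Fin (n - 1)) : RP n := permRP (Equiv.swap (lo i) (hi i))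

/-- The generator `q̄_i = t̄_{i,i+1}`. -/
def qbar {n : ℕ} (i : Fin (n - 1)) : RP n := tbar (lo i) (hi i)

/-- Membership in the subsemigroup generated by a subset `X`. -/
inductive SgGen {M : Type*} [Mul M] (X : Set M) : M → Prop
  | incl {x : M} : x ∈ X → SgGen X x
  | mul {a b : M} : SgGen X a → SgGen X b → SgGen X (a * b)

/-- Membership in the submonoid generated by a subset `X`. -/
inductive MonGen {M : Type*} [Mul M] [One M] (X : Set M) : M → Prop
  | one : MonGen X 1
  | incl {x : M} : x ∈ X → MonGen X x
  | mul {a b : M} : MonGen X a → MonGen X b → MonGen X (a * b)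

/-- Evaluation of a word under a map on the letters (the product, in order, of the images
of the letters; the empty word evaluates to `1`). -/
def evalWord {X M : Type*} [Mul M] [One M] (f : X → M) : List X → M
  | [] => 1
  | [x] => f x
  | x :: y :: w => f x * evalWord f (y :: w)

/-- The congruence on the free monoid of words (with product = concatenation) generated
by a set of pairs `R`.  Restricted to nonempty words it is the congruence on the free
semigroup generated by `R`. -/
inductive CongGen {X : Type*} (R : List X → List X → Prop) : List X → List X → Prop
  | rel {u v : List X} : R u v → CongGen R u v
  | refl (u : List X) : CongGen R u u
  | symm {u v : List X} : CongGen R u v → CongGen R v u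
  | trans {u v w : List X} : CongGen R u v → CongGen R v w → CongGen R u w
  | mul {u v u' v' : List X} : CongGen R u v → CongGen R u' v' → CongGen R (u ++ u') (v ++ v')

/-! ### Calculus of products -/

section Products

variable {n : ℕ}

theorem rp_ext {α β : RP n} (h : ∀ a b, α.rel a b ↔ β.rel a b) : α = β := by
  cases α; cases β
  congr
  funext a b
  exact propext (h a b)

instance finiteRP : Finite (RP n) :=
  Finite.of_injective (fun α : RP n => α.rel) fun α β h =>
    rp_ext fun a b => iff_of_eq (congrFun (congrFun h a) b)

theorem mul_rel {α β : RP n} {x y : Pt n} : (α * β).rel x y ↔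
    pgConn α β (embOut x) (embOut y) ∧
      ∀ w, pgWhite α β w → ¬ pgConn α β (embOut x) w := Iff.rfl

/-- Connectivity is the least equivalence relation containing the edges of both factors. -/
theorem conn_le {α β : RP n} {E : V3 n → V3 n → Prop} (hE : Equivalence E)
    (hA : ∀ a b, α.rel a b → E (embA a) (embA b))
    (hB : ∀ a b, β.rel a b → E (embB a) (embB b)) {u v : V3 n}
    (h : pgConn α β u v) : E u v := by
  induction h with
  | base h =>
    rcases h with ⟨a, b, h, rfl, rfl⟩ | ⟨a, b, h, rfl, rfl⟩
    · exact hA a b h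
    · exact hB a b h
  | refl x => exact hE.refl x
  | symm _ ih => exact hE.symm ih
  | trans _ _ ih1 ih2 => exact hE.trans ih1 ih2

theorem embB_eq (a : Pt n) : embB a = Sum.inr a := by cases a <;> rfl

theorem connA {α β : RP n} {a b : Pt n} (h : α.rel a b) :
    pgConn α β (embA a) (embA b) := .base (.inl ⟨a, b, h, rfl, rfl⟩)

theorem connB {α β : RP n} {a b : Pt n} (h : β.rel a b) :
    pgConn α β (Sum.inr a) (Sum.inr b) :=
  .base (.inr ⟨a, b, h, (embB_eq a).symm, (embB_eq b).symm⟩)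

/-- A dotless upper factor contributes no white vertices. -/
theorem white_iff {α β : RP n} (h : α.NoDots) (w : V3 n) :
    pgWhite α β w ↔ ∃ p : Pt n, w = Sum.inr p ∧ ¬ β.rel p p := by
  constructor
  · rintro (⟨i, rfl, h'⟩ | ⟨i, rfl, h' | h'⟩ | ⟨i, rfl, h'⟩)
    · exact absurd (h _) h'
    · exact absurd (h _) h'
    · exact ⟨_, rfl, h'⟩
    · exact ⟨_, rfl, h'⟩
  · rintro ⟨i | i, rfl, h'⟩
    · exact .inr (.inl ⟨i, rfl, .inr h'⟩)
    · exact .inr (.inr ⟨i, rfl, h'⟩)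

/-- The equality-or-`β`-related relation pulled back along `f`. -/
theorem equivalence_pull {V : Type*} (β : RP n) (f : V → Pt n) :
    Equivalence fun u v => f u = f v ∨ β.rel (f u) (f v) where
  refl _ := .inl rfl
  symm h := h.imp Eq.symm β.symm
  trans := by
    rintro x y z (h | h) (h' | h')
    · exact .inl (h.trans h')
    · exact .inr (h ▸ h')
    · exact .inr (h' ▸ h)
    · exact .inr (β.trans h h')

/-- Left multiplication by a permutation relabels the upper points. -/
theorem perm_mul_rel (σ : Equiv.Perm (Fin n)) (β : RP n) (x y : Pt n) :
    (permRP σ * β).rel x y ↔ β.rel (Sum.map σ id x) (Sum.map σ id y) := by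
  let f : V3 n → Pt n := Sum.elim (fun i => Sum.inl (σ i)) id
  have hf : ∀ u, pgConn (permRP σ) β u (Sum.inr (f u)) := by
    rintro (i | p)
    · exact connA (a := Sum.inl i) (b := Sum.inr (σ i)) rfl
    · exact .refl _
  have hc : ∀ u v, pgConn (permRP σ) β u v ↔ f u = f v ∨ β.rel (f u) (f v) := by
    intro u v
    constructor
    · refine conn_le (equivalence_pull β f) ?_ ?_
      · rintro (a | a) (b | b) h <;> left <;>
          simpa [f, embA, vTop, vMid, permRP] using h
      · intro a b h
        rw [embB_eq, embB_eq]
        exact .inr h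
    · rintro (h | h)
      · have := hf u
        rw [h] at this
        exact this.trans (hf v).symm
      · exact (hf u).trans ((connB h).trans (hf v).symm)
  have ho : ∀ z : Pt n, f (embOut z) = Sum.map σ id z := by rintro (z | z) <;> rfl
  have hd : (permRP σ).NoDots := fun _ => rfl
  rw [mul_rel, hc, ho, ho]
  constructor
  · rintro ⟨h | h, h'⟩
    · rw [← h]
      by_contra hn
      refine h' (Sum.inr (f (embOut x))) ((white_iff hd _).2 ⟨_, rfl, ?_⟩) (hf _)
      rwa [ho]
    · exact h
  · intro h
    refine ⟨.inr h, fun w hw hcw => ?_⟩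
    obtain ⟨p, rfl, hp⟩ := (white_iff hd _).1 hw
    rw [hc, ho] at hcw
    change _ = p ∨ β.rel _ p at hcw
    rcases hcw with rfl | h1
    · exact hp (β.trans h (β.symm h))
    · exact hp (β.trans (β.symm h1) h1)

/-- Remove the point `x` from its block (or undot it) and make it a singleton block. -/
def iso (x : Pt n) (α : RP n) : RP n where
  rel a b := (a = x ∧ b = x) ∨ (a ≠ x ∧ b ≠ x ∧ α.rel a b)
  symm := by
    rintro a b (⟨h, h'⟩ | ⟨h, h', h''⟩)
    · exact .inl ⟨h', h⟩
    · exact .inr ⟨h', h, α.symm h''⟩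
  trans := by
    rintro a b c (⟨h, h'⟩ | ⟨h, h', h''⟩) (⟨k, k'⟩ | ⟨k, k', k''⟩)
    · exact .inl ⟨h, k'⟩
    · exact absurd h' k
    · exact absurd k h'
    · exact .inr ⟨h, k', α.trans h'' k''⟩

/-- Turn every point of the block of `x` into a rook dot. -/
def kill (x : Pt n) (α : RP n) : RP n where
  rel a b := α.rel a b ∧ ¬ α.rel x a
  symm := fun ⟨h, h'⟩ => ⟨α.symm h, fun k => h' (α.trans k (α.symm h))⟩
  trans := fun ⟨h, h'⟩ ⟨k, _⟩ => ⟨α.trans h k, h'⟩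

/-- Unite the blocks of `x` and `y`; intended for points that are not rook dots. -/
def merge (x y : Pt n) (α : RP n) : RP n where
  rel a b := α.rel a b ∨ ((α.rel x a ∨ α.rel y a) ∧ (α.rel x b ∨ α.rel y b))
  symm := fun h => h.imp α.symm And.symm
  trans := by
    rintro a b c (h | ⟨h, h'⟩) (k | ⟨k, k'⟩)
    · exact .inl (α.trans h k)
    · exact .inr ⟨k.imp (α.trans · (α.symm h)) (α.trans · (α.symm h)), k'⟩
    · exact .inr ⟨h, h'.imp (α.trans · k) (α.trans · k)⟩
    · exact .inr ⟨h, k'⟩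

/-- The projection of the product graph onto the points of the lower factor. -/
def proj : V3 n → Pt n := Sum.elim Sum.inl id

theorem proj_embOut (z : Pt n) : proj (embOut z) = z := by cases z <;> rfl

theorem proj_embA (z : Pt n) : proj (embA z) = Sum.inl (idx z) := by cases z <;> rfl

/-- Both `ē_i` and `ō_i` join exactly the vertical pairs away from `i`, so they give the same
connectivity: the top vertex `i` is isolated and everything else is governed by `β`. -/
theorem cut_conn {γ β : RP n} {i : Fin n}
    (h1 : ∀ a b, γ.rel a b → a = b ∨ (idx a = idx b ∧ idx a ≠ i))
    (h2 : ∀ a b, idx a = idx b → idx a ≠ i → γ.rel a b) (u v : V3 n) :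
    pgConn γ β u v ↔ u = v ∨ (u ≠ vTop i ∧ v ≠ vTop i ∧
      (proj u = proj v ∨ β.rel (proj u) (proj v))) := by
  have hf : ∀ u, u ≠ vTop i → pgConn γ β u (Sum.inr (proj u)) := by
    rintro (k | p) hk
    · refine connA (a := Sum.inl k) (b := Sum.inr k) (h2 _ _ rfl ?_)
      rintro rfl
      exact hk rfl
    · exact .refl _
  constructor
  · refine conn_le (E := fun u v => u = v ∨ (u ≠ vTop i ∧ v ≠ vTop i ∧
      (proj u = proj v ∨ β.rel (proj u) (proj v)))) ⟨fun _ => .inl rfl, ?_, ?_⟩ ?_ ?_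
    · rintro x y (rfl | ⟨k, l, m⟩)
      · exact .inl rfl
      · exact .inr ⟨l, k, (equivalence_pull β proj).symm m⟩
    · rintro x y z (rfl | ⟨k, l, m⟩) (rfl | ⟨k', l', m'⟩)
      · exact .inl rfl
      · exact .inr ⟨k', l', m'⟩
      · exact .inr ⟨k, l, m⟩
      · exact .inr ⟨k, l', (equivalence_pull β proj).trans m m'⟩
    · intro a b h
      rcases h1 a b h with rfl | ⟨h, h'⟩
      · exact .inl rfl
      · have key : ∀ z : Pt n, idx z ≠ i → embA z ≠ vTop i := by
          rintro (z | z) hz he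
          · exact hz (Sum.inl.inj he)
          · exact Sum.inr_ne_inl he
        refine .inr ⟨key a h', key b (h ▸ h'), .inl ?_⟩
        rw [proj_embA, proj_embA, h]
    · intro a b h
      rw [embB_eq, embB_eq]
      exact .inr ⟨Sum.inr_ne_inl, Sum.inr_ne_inl, .inr h⟩
  · rintro (rfl | ⟨k, l, m | m⟩)
    · exact .refl _
    · have := hf u k
      rw [m] at this
      exact this.trans (hf v l).symm
    · exact (hf u k).trans ((connB m).trans (hf v l).symm)

theorem embOut_eq_top {x : Pt n} {i : Fin n} : embOut x = vTop i ↔ x = Sum.inl i := by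
  cases x <;> simp [embOut, vTop, vBot]

theorem ebar_noDots (i : Fin n) : (ebar i).NoDots := fun _ => .inl rfl

theorem ebar_mul (i : Fin n) (β : RP n) : ebar i * β = iso (Sum.inl i) β := by
  have hc := cut_conn (γ := ebar i) (β := β) (i := i) (fun a b h => h)
    (fun a b h h' => .inr ⟨h, h'⟩)
  refine rp_ext fun x y => ?_
  rw [mul_rel]
  simp only [hc, Ne, embOut_eq_top, proj_embOut, white_iff (ebar_noDots i)]
  change _ ↔ (_ ∧ _) ∨ (_ ∧ _ ∧ _)
  by_cases hx : x = Sum.inl i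
  · subst hx
    constructor
    · rintro ⟨h | h, -⟩
      · refine .inl ⟨rfl, ?_⟩
        rw [← proj_embOut y, ← h, proj_embOut]
      · exact absurd rfl h.1
    · rintro (⟨-, rfl⟩ | h)
      · refine ⟨.inl rfl, ?_⟩
        rintro w ⟨p, rfl, -⟩ (h | h)
        · exact Sum.inl_ne_inr h
        · exact h.1 rfl
      · exact absurd rfl h.1
  · constructor
    · rintro ⟨h, h'⟩
      have hxx : β.rel x x := by
        by_contra hn
        exact h' _ ⟨x, rfl, hn⟩ (.inr ⟨hx, Sum.inr_ne_inl, .inl rfl⟩)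
      rcases h with h | ⟨-, h2, h | h⟩
      · have : x = y := by rw [← proj_embOut y, ← h, proj_embOut]
        subst this
        exact .inr ⟨hx, hx, hxx⟩
      · subst h
        exact .inr ⟨hx, hx, hxx⟩
      · exact .inr ⟨hx, h2, h⟩
    · rintro (⟨h, -⟩ | ⟨-, hy, h⟩)
      · exact absurd h hx
      · refine ⟨.inr ⟨hx, hy, .inr h⟩, ?_⟩
        have hxx := β.trans h (β.symm h)
        rintro w ⟨p, rfl, hp⟩ (h1 | ⟨-, -, h1 | h1⟩)
        · have : x = p := by rw [← proj_embOut x, h1]; rfl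
          exact hp (this ▸ hxx)
        · have : x = p := h1
          exact hp (this ▸ hxx)
        · exact hp (β.trans (β.symm h1) h1)

theorem obar_mul (i : Fin n) (β : RP n) (hi : β.rel (Sum.inl i) (Sum.inl i)) :
    obar i * β = kill (Sum.inl i) β := by
  have hc := cut_conn (γ := obar i) (β := β) (i := i) (fun a b h => .inr h)
    (fun a b h h' => ⟨h, h'⟩)
  have hdot : ∀ p : Pt n, ¬ (obar i).rel p p ↔ idx p = i := fun p => by
    simp [obar, obarS]
  refine rp_ext fun x y => ?_
  rw [mul_rel]
  simp only [hc, Ne, embOut_eq_top, proj_embOut]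
  change _ ↔ _ ∧ _
  by_cases hx : x = Sum.inl i
  · subst hx
    refine iff_of_false ?_ fun h => h.2 hi
    rintro ⟨-, h⟩
    exact h (vTop i) (.inl ⟨i, rfl, (hdot _).2 rfl⟩) (.inl rfl)
  · constructor
    · rintro ⟨h, h'⟩
      have hxx : β.rel x x := by
        by_contra hn
        refine h' (Sum.inr x) ?_ (.inr ⟨hx, Sum.inr_ne_inl, .inl rfl⟩)
        rcases x with k | k
        · exact .inr (.inl ⟨k, rfl, .inr hn⟩)
        · exact .inr (.inr ⟨k, rfl, hn⟩)
      refine ⟨?_, fun k => h' (vMid i) (.inr (.inl ⟨i, rfl, .inl ((hdot _).2 rfl)⟩))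
        (.inr ⟨hx, Sum.inr_ne_inl, .inr (β.symm k)⟩)⟩
      rcases h with h | ⟨-, h2, h | h⟩
      · have : x = y := by rw [← proj_embOut y, ← h, proj_embOut]
        exact this ▸ hxx
      · exact h ▸ hxx
      · exact h
    · rintro ⟨h, h'⟩
      have hxx := β.trans h (β.symm h)
      refine ⟨.inr ⟨hx, fun hy => h' (hy ▸ β.symm h), .inr h⟩, ?_⟩
      intro w hw hcw
      have hxw : w ≠ vTop i ∧ β.rel x (proj w) := by
        rcases hcw with h1 | ⟨-, h0, h1 | h1⟩
        · subst h1
          rw [proj_embOut]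
          exact ⟨fun h => hx (embOut_eq_top.1 h), hxx⟩
        · exact ⟨h0, h1 ▸ hxx⟩
        · exact ⟨h0, h1⟩
      obtain ⟨hwi, hxw⟩ := hxw
      have hww := β.trans (β.symm hxw) hxw
      rcases hw with ⟨k, rfl, hk⟩ | ⟨k, rfl, hk | hk⟩ | ⟨k, rfl, hk⟩
      · have : k = i := (hdot _).1 hk
        exact hwi (this ▸ rfl)
      · have : k = i := (hdot _).1 hk
        subst this
        exact h' (β.symm hxw)
      · exact hk hww
      · exact hk hww

theorem tbar_mul (i j : Fin n) (β : RP n) (hβ : β.NoDots) :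
    tbar i j * β = merge (Sum.inl i) (Sum.inl j) β := by
  have hd : (tbar i j).NoDots := fun _ => .inl rfl
  have hf : ∀ u, pgConn (tbar i j) β u (Sum.inr (proj u)) := by
    rintro (k | p)
    · exact connA (a := Sum.inl k) (b := Sum.inr k) (.inl rfl)
    · exact .refl _
  have hij : pgConn (tbar i j) β (vMid i) (vMid j) :=
    connA (a := Sum.inr i) (b := Sum.inr j) (.inr ⟨.inl rfl, .inr rfl⟩)
  have hc : ∀ u v, pgConn (tbar i j) β u v ↔
      (merge (Sum.inl i) (Sum.inl j) β).rel (proj u) (proj v) := by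
    intro u v
    constructor
    · refine conn_le (E := fun u v => (merge (Sum.inl i) (Sum.inl j) β).rel (proj u) (proj v))
        ⟨fun _ => .inl (hβ _), (merge _ _ β).symm, (merge _ _ β).trans⟩ ?_ ?_
      · have e : ∀ k l : Fin n, k = l → β.rel (Sum.inl l) (Sum.inl k) := by
          rintro k _ rfl
          exact hβ _
        rintro a b (h | ⟨h, h'⟩)
        · rw [proj_embA, proj_embA, h]
          exact .inl (hβ _)
        · rw [proj_embA, proj_embA]
          refine .inr ⟨?_, ?_⟩
          · exact h.imp (e _ _) (e _ _)
          · exact h'.imp (e _ _) (e _ _)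
      · intro a b h
        rw [embB_eq, embB_eq]
        exact .inl h
    · have key : ∀ w, β.rel (Sum.inl i) (proj w) ∨ β.rel (Sum.inl j) (proj w) →
          pgConn (tbar i j) β w (vMid i) := by
        rintro w (h | h)
        · exact (hf w).trans (connB h).symm
        · exact (hf w).trans ((connB h).symm.trans hij.symm)
      rintro (h | ⟨h, h'⟩)
      · exact (hf u).trans ((connB h).trans (hf v).symm)
      · exact (key u h).trans (key v h').symm
  refine rp_ext fun x y => ?_
  rw [mul_rel, hc, proj_embOut, proj_embOut]
  refine and_iff_left fun w hw => ?_
  obtain ⟨p, -, hp⟩ := (white_iff hd _).1 hw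
  exact absurd (hβ p) hp

/-! ### The anti-involution exchanging upper and lower points -/

/-- Reflection of a rook partition in the horizontal axis. -/
def flip (α : RP n) : RP n where
  rel a b := α.rel a.swap b.swap
  symm := fun h => α.symm h
  trans := fun h k => α.trans h k

/-- Reflection of the three rows of the product graph. -/
def flipV : V3 n → V3 n := Sum.elim vBot (Sum.elim vMid vTop)

theorem flip_flip (α : RP n) : flip (flip α) = α :=
  rp_ext fun a b => by simp [flip]

theorem flipV_flipV (u : V3 n) : flipV (flipV u) = u := by
  rcases u with u | u | u <;> rfl

theorem flip_conn {α β : RP n} {u v : V3 n} (h : pgConn α β u v) :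
    pgConn (flip β) (flip α) (flipV u) (flipV v) := by
  have eA : ∀ z : Pt n, flipV (embA z) = embB z.swap := by rintro (z | z) <;> rfl
  have eB : ∀ z : Pt n, flipV (embB z) = embA z.swap := by rintro (z | z) <;> rfl
  refine conn_le (E := fun u v => pgConn (flip β) (flip α) (flipV u) (flipV v))
    ⟨fun _ => .refl _, fun h => .symm h, fun h k => .trans h k⟩ ?_ ?_ h
  · intro a b h
    rw [eA, eA]
    exact .base (.inr ⟨_, _, by simpa [flip] using h, rfl, rfl⟩)
  · intro a b h
    rw [eB, eB]
    exact .base (.inl ⟨_, _, by simpa [flip] using h, rfl, rfl⟩)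

theorem flip_white {α β : RP n} {w : V3 n} (h : pgWhite α β w) :
    pgWhite (flip β) (flip α) (flipV w) := by
  rcases h with ⟨k, rfl, hk⟩ | ⟨k, rfl, hk⟩ | ⟨k, rfl, hk⟩
  · exact .inr (.inr ⟨k, rfl, hk⟩)
  · exact .inr (.inl ⟨k, rfl, hk.symm⟩)
  · exact .inl ⟨k, rfl, hk⟩

theorem flip_mul_aux {α β : RP n} {x y : Pt n} (h : (α * β).rel x y) :
    (flip β * flip α).rel x.swap y.swap := by
  have e : ∀ z : Pt n, embOut z.swap = flipV (embOut z) := by rintro (z | z) <;> rfl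
  rw [mul_rel] at h ⊢
  rw [e, e]
  refine ⟨flip_conn h.1, fun w hw hcw => h.2 (flipV w) ?_ ?_⟩
  · simpa [flip_flip] using flip_white hw
  · simpa [flip_flip, flipV_flipV] using flip_conn hcw

theorem flip_mul (α β : RP n) : flip (α * β) = flip β * flip α := by
  refine rp_ext fun x y => ⟨fun h => ?_, fun h => ?_⟩
  · simpa using flip_mul_aux h
  · have := flip_mul_aux h
    rwa [flip_flip, flip_flip] at this

theorem mul_eq_flip (α β : RP n) : α * β = flip (flip β * flip α) := by
  rw [← flip_mul, flip_flip]

theorem flip_ebar (i : Fin n) : flip (ebar i) = ebar i :=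
  rp_ext fun a b => by cases a <;> cases b <;> simp [flip, ebar, idx]

theorem flip_obar (i : Fin n) : flip (obar i) = obar i :=
  rp_ext fun a b => by cases a <;> cases b <;> simp [flip, obar, obarS, idx]

theorem flip_tbar (i j : Fin n) : flip (tbar i j) = tbar i j :=
  rp_ext fun a b => by cases a <;> cases b <;> simp [flip, tbar, idx]

theorem flip_perm (σ : Equiv.Perm (Fin n)) : flip (permRP σ) = permRP σ⁻¹ := by
  refine rp_ext fun a b => ?_
  rcases a with a | a <;> rcases b with b | b
  · simp [flip, permRP]
  · exact (σ.symm_apply_eq (x := a) (y := b)).symm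
  · exact (σ.eq_symm_apply (x := b) (y := a)).symm
  · simp [flip, permRP]

theorem flip_iso (x : Pt n) (α : RP n) : flip (iso x (flip α)) = iso x.swap α := by
  have e : ∀ a : Pt n, a.swap = x ↔ a = x.swap := fun a =>
    ⟨fun h => by rw [← h, Sum.swap_swap], fun h => by rw [h, Sum.swap_swap]⟩
  refine rp_ext fun a b => ?_
  simp [flip, iso, e]

theorem flip_kill (x : Pt n) (α : RP n) : flip (kill x (flip α)) = kill x.swap α :=
  rp_ext fun a b => by simp [flip, kill]

theorem flip_merge (x y : Pt n) (α : RP n) :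
    flip (merge x y (flip α)) = merge x.swap y.swap α :=
  rp_ext fun a b => by simp [flip, merge]

theorem mul_ebar (i : Fin n) (β : RP n) : β * ebar i = iso (Sum.inr i) β := by
  rw [mul_eq_flip, flip_ebar, ebar_mul, flip_iso, Sum.swap_inl]

theorem mul_obar (i : Fin n) (β : RP n) (hi : β.rel (Sum.inr i) (Sum.inr i)) :
    β * obar i = kill (Sum.inr i) β := by
  rw [mul_eq_flip, flip_obar, obar_mul _ _ hi, flip_kill, Sum.swap_inl]

theorem mul_tbar (i j : Fin n) (β : RP n) (hβ : β.NoDots) :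
    β * tbar i j = merge (Sum.inr i) (Sum.inr j) β := by
  rw [mul_eq_flip, flip_tbar, tbar_mul i j (flip β) (fun x => hβ _), flip_merge, Sum.swap_inl,
    Sum.swap_inl]

theorem mul_perm_rel (σ : Equiv.Perm (Fin n)) (β : RP n) (x y : Pt n) :
    (β * permRP σ).rel x y ↔ β.rel (Sum.map id ⇑σ⁻¹ x) (Sum.map id ⇑σ⁻¹ y) := by
  rw [mul_eq_flip, flip_perm]
  change (permRP σ⁻¹ * flip β).rel x.swap y.swap ↔ _
  rw [perm_mul_rel]
  cases x <;> cases y <;> rfl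

theorem perm_mul_perm (σ τ : Equiv.Perm (Fin n)) :
    permRP σ * permRP τ = permRP (τ * σ) := by
  refine rp_ext fun x y => ?_
  rw [perm_mul_rel]
  cases x <;> cases y <;> rfl

theorem permRP_one : permRP (1 : Equiv.Perm (Fin n)) = 1 :=
  rp_ext fun x y => by cases x <;> cases y <;> rfl

theorem permRP_injective : Function.Injective (permRP (n := n)) := by
  intro σ τ h
  ext1 i
  have : (permRP σ).rel (Sum.inl i) (Sum.inr (σ i)) := rfl
  rw [h] at this
  exact Eq.symm this

end Products

/-! ### Defects of the upper row -/

section Defects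

variable {n : ℕ}

/-- Some upper point is a rook dot. -/
def TopDot (α : RP n) : Prop := ∃ i, ¬ α.rel (Sum.inl i) (Sum.inl i)

/-- Two upper points are indistinguishable: in the same block, or both rook dots.  Counting
pairs of dots makes the property stable under right multiplication. -/
def TopPair (α : RP n) : Prop := ∃ i j, i ≠ j ∧ (α.rel (Sum.inl i) (Sum.inl j) ∨
  (¬ α.rel (Sum.inl i) (Sum.inl i) ∧ ¬ α.rel (Sum.inl j) (Sum.inl j)))

/-- Some block consists of upper points only. -/
def TopBlock (α : RP n) : Prop := ∃ i, α.rel (Sum.inl i) (Sum.inl i) ∧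
  ∀ j, ¬ α.rel (Sum.inl i) (Sum.inr j)

theorem TopDot.mul {α : RP n} (h : TopDot α) (β : RP n) : TopDot (α * β) := by
  obtain ⟨i, hi⟩ := h
  exact ⟨i, fun h => h.2 (vTop i) (.inl ⟨i, rfl, hi⟩) (.refl _)⟩

theorem TopPair.mul {α : RP n} (h : TopPair α) (β : RP n) : TopPair (α * β) := by
  obtain ⟨i, j, hij, h | ⟨hi, hj⟩⟩ := h
  · have hc : pgConn α β (vTop i) (vTop j) := connA (a := Sum.inl i) (b := Sum.inl j) h
    refine ⟨i, j, hij, ?_⟩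
    by_cases hw : ∃ w, pgWhite α β w ∧ pgConn α β (vTop i) w
    · obtain ⟨w, hw, hcw⟩ := hw
      exact .inr ⟨fun h => h.2 w hw hcw, fun h => h.2 w hw (hc.symm.trans hcw)⟩
    · push Not at hw
      exact .inl ⟨hc, hw⟩
  · exact ⟨i, j, hij, .inr ⟨fun h => h.2 (vTop i) (.inl ⟨i, rfl, hi⟩) (.refl _),
      fun h => h.2 (vTop j) (.inl ⟨j, rfl, hj⟩) (.refl _)⟩⟩

theorem TopBlock.mul {α : RP n} (h : TopBlock α) (β : RP n) : TopBlock (α * β) := by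
  obtain ⟨i, hi, hb⟩ := h
  -- the block of `i` is a connected component of the product graph
  let Q : V3 n → Prop := fun u => ∃ k, u = vTop k ∧ α.rel (Sum.inl i) (Sum.inl k)
  have hA : ∀ a, Q (embA a) ↔ α.rel (Sum.inl i) a := by
    rintro (a | a)
    · constructor
      · rintro ⟨k, hk, h⟩
        cases Sum.inl.inj hk
        exact h
      · exact fun h => ⟨a, rfl, h⟩
    · exact iff_of_false (fun ⟨k, hk, _⟩ => Sum.inr_ne_inl hk) (hb a)
  have hB : ∀ a, ¬ Q (embB a) := by
    rintro a ⟨k, hk, -⟩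
    rw [embB_eq] at hk
    exact Sum.inr_ne_inl hk
  have hQ : ∀ u v, pgConn α β u v → (Q u ↔ Q v) := fun u v h => by
    refine conn_le (E := fun u v => Q u ↔ Q v)
      ⟨fun _ => Iff.rfl, Iff.symm, Iff.trans⟩ ?_ ?_ h
    · intro a b h
      rw [hA, hA]
      exact ⟨fun k => α.trans k h, fun k => α.trans k (α.symm h)⟩
    · intro a b h
      exact iff_of_false (hB a) (hB b)
  have hQi : Q (vTop i) := ⟨i, rfl, hi⟩
  refine ⟨i, ⟨.refl _, fun w hw hc => ?_⟩, fun j h => ?_⟩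
  · obtain ⟨k, rfl, hk⟩ := (hQ _ _ hc).1 hQi
    have hkk := α.trans (α.symm hk) hk
    rcases hw with ⟨l, hl, h⟩ | ⟨l, hl, h⟩ | ⟨l, hl, h⟩
    · cases Sum.inl.inj hl
      exact h hkk
    · exact Sum.inl_ne_inr hl
    · exact Sum.inl_ne_inr hl
  · obtain ⟨k, hk, -⟩ := (hQ _ _ h.1).1 hQi
    exact Sum.inr_ne_inl hk

theorem TopDot.perm_mul {β : RP n} (h : TopDot β) (σ : Equiv.Perm (Fin n)) :
    TopDot (permRP σ * β) := by
  obtain ⟨i, hi⟩ := h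
  refine ⟨σ⁻¹ i, ?_⟩
  simpa [perm_mul_rel] using hi

theorem TopPair.perm_mul {β : RP n} (h : TopPair β) (σ : Equiv.Perm (Fin n)) :
    TopPair (permRP σ * β) := by
  obtain ⟨i, j, hij, h⟩ := h
  refine ⟨σ⁻¹ i, σ⁻¹ j, fun h => hij (σ⁻¹.injective h), ?_⟩
  simpa [perm_mul_rel] using h

theorem TopBlock.perm_mul {β : RP n} (h : TopBlock β) (σ : Equiv.Perm (Fin n)) :
    TopBlock (permRP σ * β) := by
  obtain ⟨i, hi⟩ := h
  refine ⟨σ⁻¹ i, ?_⟩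
  simpa [perm_mul_rel] using hi

/-- Without defects every upper point is joined to a lower point, injectively, so by
finiteness the partition is a permutation. -/
theorem isPermDiag_of_no_defect {α : RP n} (hA : ¬ TopDot α) (hB : ¬ TopPair α)
    (hC : ¬ TopBlock α) : α.IsPermDiag := by
  have h1 : ∀ i, ∃ j, α.rel (Sum.inl i) (Sum.inr j) := by
    intro i
    by_contra h
    push Not at h
    exact hC ⟨i, by_contra fun h' => hA ⟨i, h'⟩, h⟩
  choose f hf using h1
  have inj : ∀ i j, α.rel (Sum.inl i) (Sum.inl j) → i = j := fun i j h =>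
    by_contra fun hij => hB ⟨i, j, hij, .inl h⟩
  have hfi : Function.Injective f := fun i j h =>
    inj i j (α.trans (hf i) (h ▸ α.symm (hf j)))
  have hfb := Finite.injective_iff_bijective.1 hfi
  refine ⟨Equiv.ofBijective f hfb, rp_ext fun a b => ?_⟩
  have rep : ∀ p : Pt n, ∃ i, α.rel (Sum.inl i) p ∧
      f i = Sum.elim (Equiv.ofBijective f hfb) (fun i => i) p := by
    rintro (p | p)
    · exact ⟨p, α.trans (hf p) (α.symm (hf p)), rfl⟩
    · obtain ⟨i, rfl⟩ := hfb.2 p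
      exact ⟨i, hf i, rfl⟩
  obtain ⟨i, hi, ei⟩ := rep a
  obtain ⟨j, hj, ej⟩ := rep b
  change _ ↔ Sum.elim (Equiv.ofBijective f hfb) (fun i => i) a =
    Sum.elim (Equiv.ofBijective f hfb) (fun i => i) b
  rw [← ei, ← ej]
  constructor
  · exact fun h => congrArg f (inj i j (α.trans hi (α.trans h (α.symm hj))))
  · intro h
    cases hfi h
    exact α.trans (α.symm hi) hj

theorem perm_not_topDot (σ : Equiv.Perm (Fin n)) : ¬ TopDot (permRP σ) :=
  fun ⟨_, h⟩ => h rfl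

theorem perm_not_topPair (σ : Equiv.Perm (Fin n)) : ¬ TopPair (permRP σ) := by
  rintro ⟨i, j, hij, h | h⟩
  · exact hij (σ.injective h)
  · exact h.1 rfl

theorem perm_not_topBlock (σ : Equiv.Perm (Fin n)) : ¬ TopBlock (permRP σ) :=
  fun ⟨i, _, h⟩ => h (σ i) rfl

theorem isPermDiag_of_mul {α β : RP n} (h : (α * β).IsPermDiag) :
    α.IsPermDiag ∧ β.IsPermDiag := by
  obtain ⟨σ, h⟩ := h
  have hα : α.IsPermDiag := isPermDiag_of_no_defect
    (fun k => perm_not_topDot σ (h ▸ k.mul β)) (fun k => perm_not_topPair σ (h ▸ k.mul β))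
    (fun k => perm_not_topBlock σ (h ▸ k.mul β))
  refine ⟨hα, ?_⟩
  obtain ⟨τ, rfl⟩ := hα
  exact isPermDiag_of_no_defect
    (fun k => perm_not_topDot σ (h ▸ k.perm_mul τ))
    (fun k => perm_not_topPair σ (h ▸ k.perm_mul τ))
    (fun k => perm_not_topBlock σ (h ▸ k.perm_mul τ))

theorem obar_defects (i : Fin n) :
    TopDot (obar i) ∧ ¬ TopPair (obar i) ∧ ¬ TopBlock (obar i) := by
  refine ⟨⟨i, fun h => h.2 rfl⟩, ?_, ?_⟩
  · rintro ⟨a, b, hab, h | ⟨h, h'⟩⟩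
    · exact hab h.1
    · have e : ∀ c : Fin n, ¬ (obar i).rel (Sum.inl c) (Sum.inl c) → c = i := fun c hc => by
        simpa [obar, obarS, idx] using hc
      exact hab ((e a h).trans (e b h').symm)
  · rintro ⟨a, h, h'⟩
    exact h' a ⟨rfl, h.2⟩

theorem tbar_defects {i j : Fin n} (hij : i ≠ j) :
    ¬ TopDot (tbar i j) ∧ TopPair (tbar i j) ∧ ¬ TopBlock (tbar i j) := by
  refine ⟨?_, ⟨i, j, hij, .inl (.inr ⟨.inl rfl, .inr rfl⟩)⟩, ?_⟩
  · exact fun ⟨a, h⟩ => h (.inl rfl)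
  · exact fun ⟨a, _, h⟩ => h a (.inl rfl)

theorem ebar_defects (i : Fin n) :
    ¬ TopDot (ebar i) ∧ ¬ TopPair (ebar i) ∧ TopBlock (ebar i) := by
  refine ⟨fun ⟨a, h⟩ => h (.inl rfl), ?_, ⟨i, .inl rfl, ?_⟩⟩
  · rintro ⟨a, b, hab, (h | h) | h⟩
    · exact hab (Sum.inl.inj h)
    · exact hab h.1
    · exact h.1 (.inl rfl)
  · rintro j (h | h)
    · exact Sum.inl_ne_inr h
    · exact h.2 rfl

end Defects

/-! ### The lower bound -/

section LowerBound

variable {n : ℕ}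

/-- The defects of a non-permutation include those of the first non-permutation factor in any
factorisation into generators. -/
theorem exists_gen_defects {G : Set (RP n)} {α : RP n} (h : MonGen G α) :
    α.IsPermDiag ∨ ∃ g ∈ G, ¬ g.IsPermDiag ∧ (TopDot g → TopDot α) ∧
      (TopPair g → TopPair α) ∧ (TopBlock g → TopBlock α) := by
  induction h with
  | one => exact .inl ⟨1, permRP_one.symm⟩
  | @incl x hx =>
    by_cases hp : x.IsPermDiag
    · exact .inl hp
    · exact .inr ⟨x, hx, hp, id, id, id⟩
  | @mul a b _ _ iha ihb =>
    rcases iha with ⟨σ, rfl⟩ | ⟨g, hg, hp, h1, h2, h3⟩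
    · rcases ihb with ⟨τ, rfl⟩ | ⟨g, hg, hp, h1, h2, h3⟩
      · exact .inl ⟨_, perm_mul_perm σ τ⟩
      · exact .inr ⟨g, hg, hp, fun h => (h1 h).perm_mul σ, fun h => (h2 h).perm_mul σ,
          fun h => (h3 h).perm_mul σ⟩
    · exact .inr ⟨g, hg, hp, fun h => (h1 h).mul b, fun h => (h2 h).mul b,
        fun h => (h3 h).mul b⟩

theorem exists_gen_defects' {G : Set (RP n)} {α : RP n} (h : MonGen G α)
    (hd : TopDot α ∨ TopPair α ∨ TopBlock α) :
    ∃ g ∈ G, (TopDot g ∨ TopPair g ∨ TopBlock g) ∧ (TopDot g → TopDot α) ∧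
      (TopPair g → TopPair α) ∧ (TopBlock g → TopBlock α) := by
  rcases exists_gen_defects h with ⟨σ, rfl⟩ | ⟨g, hg, hp, h⟩
  · rcases hd with h | h | h
    · exact absurd h (perm_not_topDot σ)
    · exact absurd h (perm_not_topPair σ)
    · exact absurd h (perm_not_topBlock σ)
  · refine ⟨g, hg, ?_, h⟩
    by_contra hn
    push Not at hn
    exact hp (isPermDiag_of_no_defect hn.1 hn.2.1 hn.2.2)

theorem perm_mem_closure {G : Set (RP n)} {α : RP n} (h : MonGen G α) :
    ∀ σ, α = permRP σ → σ ∈ Submonoid.closure {τ | permRP τ ∈ G} := by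
  induction h with
  | one =>
    intro σ h
    rw [← permRP_one] at h
    rw [← permRP_injective h]
    exact one_mem _
  | @incl x hx =>
    rintro σ rfl
    exact Submonoid.subset_closure hx
  | @mul a b _ _ iha ihb =>
    intro σ h
    obtain ⟨⟨ρ, rfl⟩, ⟨τ, rfl⟩⟩ := isPermDiag_of_mul ⟨σ, h⟩
    rw [perm_mul_perm] at h
    rw [← permRP_injective h]
    exact mul_mem (ihb τ rfl) (iha ρ rfl)

/-- The symmetric group of degree at least three is not commutative, so it has no generating
set with at most one element. -/
theorem two_perms {n : ℕ} (hn : 3 ≤ n) {S : Set (Equiv.Perm (Fin n))}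
    (hS : ∀ σ, σ ∈ Submonoid.closure S) : S.Nontrivial := by
  rw [← Set.not_subsingleton_iff]
  intro hs
  obtain ⟨σ, hσ⟩ : ∃ σ, S ⊆ {σ} := by
    rcases hs.eq_empty_or_singleton with rfl | ⟨σ, rfl⟩
    · exact ⟨1, Set.empty_subset _⟩
    · exact ⟨σ, subset_rfl⟩
  have hp : ∀ τ, ∃ k : ℕ, σ ^ k = τ := fun τ =>
    Submonoid.mem_closure_singleton.1 (Submonoid.closure_mono hσ (hS τ))
  let a : Fin n := ⟨0, by omega⟩
  let b : Fin n := ⟨1, by omega⟩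
  let c : Fin n := ⟨2, by omega⟩
  have hab : a ≠ b := by simp [a, b]
  have hac : a ≠ c := by simp [a, c]
  have hbc : b ≠ c := by simp [b, c]
  obtain ⟨k, hk⟩ := hp (Equiv.swap a b)
  obtain ⟨l, hl⟩ := hp (Equiv.swap b c)
  have hcomm : Equiv.swap a b * Equiv.swap b c = Equiv.swap b c * Equiv.swap a b := by
    rw [← hk, ← hl, ← pow_add, ← pow_add, add_comm]
  have := congrArg (fun τ : Equiv.Perm (Fin n) => τ a) hcomm
  simp [Equiv.swap_apply_of_ne_of_ne hab hac] at this
  exact hbc this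

/-- Five elements told apart by their defects, and two distinct permutations. -/
theorem ncard_five {a b c : RP n} {σ τ : Equiv.Perm (Fin n)}
    (ha : TopDot a ∧ ¬ TopPair a ∧ ¬ TopBlock a) (hb : ¬ TopDot b ∧ TopPair b ∧ ¬ TopBlock b)
    (hc : ¬ TopDot c ∧ ¬ TopPair c ∧ TopBlock c) (hστ : σ ≠ τ) :
    ({a, b, c, permRP σ, permRP τ} : Set (RP n)).ncard = 5 := by
  have hab : a ≠ b := fun h => hb.1 (h ▸ ha.1)
  have hac : a ≠ c := fun h => hc.1 (h ▸ ha.1)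
  have hbc : b ≠ c := fun h => hc.2.1 (h ▸ hb.2.1)
  have ha' : ∀ ρ, a ≠ permRP ρ := fun ρ h => perm_not_topDot ρ (h ▸ ha.1)
  have hb' : ∀ ρ, b ≠ permRP ρ := fun ρ h => perm_not_topPair ρ (h ▸ hb.2.1)
  have hc' : ∀ ρ, c ≠ permRP ρ := fun ρ h => perm_not_topBlock ρ (h ▸ hc.2.2)
  rw [Set.ncard_insert_of_notMem (by simp [hab, hac, ha']),
    Set.ncard_insert_of_notMem (by simp [hbc, hb']),
    Set.ncard_insert_of_notMem (by simp [hc']),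
    Set.ncard_pair fun h => hστ (permRP_injective h)]

theorem five_le_ncard (hn : 3 ≤ n) (G : Set (RP n)) (hG : ∀ α : RP n, MonGen G α) :
    5 ≤ G.ncard := by
  let i : Fin n := ⟨0, by omega⟩
  let j : Fin n := ⟨1, by omega⟩
  have hij : i ≠ j := by simp [i, j]
  have o := obar_defects i
  have t := tbar_defects hij
  have e := ebar_defects i
  obtain ⟨a, ha, ha1, ha2, ha3, ha4⟩ := exists_gen_defects' (hG (obar i)) (.inl o.1)
  obtain ⟨b, hb, hb1, hb2, hb3, hb4⟩ :=
    exists_gen_defects' (hG (tbar i j)) (.inr (.inl t.2.1))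
  obtain ⟨c, hc, hc1, hc2, hc3, hc4⟩ :=
    exists_gen_defects' (hG (ebar i)) (.inr (.inr e.2.2))
  obtain ⟨σ, hσ, τ, hτ, hστ⟩ := two_perms hn fun σ => perm_mem_closure (hG (permRP σ)) σ rfl
  have ha' : TopDot a ∧ ¬ TopPair a ∧ ¬ TopBlock a :=
    ⟨ha1.resolve_right (not_or.2 ⟨fun h => o.2.1 (ha3 h), fun h => o.2.2 (ha4 h)⟩),
      fun h => o.2.1 (ha3 h), fun h => o.2.2 (ha4 h)⟩
  have hb' : ¬ TopDot b ∧ TopPair b ∧ ¬ TopBlock b :=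
    ⟨fun h => t.1 (hb2 h), (hb1.resolve_left fun h => t.1 (hb2 h)).resolve_right
      fun h => t.2.2 (hb4 h), fun h => t.2.2 (hb4 h)⟩
  have hc' : ¬ TopDot c ∧ ¬ TopPair c ∧ TopBlock c :=
    ⟨fun h => e.1 (hc2 h), fun h => e.2.1 (hc3 h),
      (hc1.resolve_left fun h => e.1 (hc2 h)).resolve_left fun h => e.2.1 (hc3 h)⟩
  rw [← ncard_five (a := a) (b := b) (c := c) ha' hb' hc' hστ]
  refine Set.ncard_le_ncard ?_ (Set.toFinite G)
  rintro x (rfl | rfl | rfl | rfl | rfl) <;> assumption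

end LowerBound

/-! ### The generating set -/

section Generation

variable {n : ℕ}

/-- Conjugation by a permutation. -/
theorem conj_rel (σ : Equiv.Perm (Fin n)) (β : RP n) (x y : Pt n) :
    (permRP σ * β * permRP σ⁻¹).rel x y ↔ β.rel (Sum.map σ σ x) (Sum.map σ σ y) := by
  rw [mul_perm_rel, perm_mul_rel, inv_inv]
  simp [Sum.map_map]

theorem idx_map (σ : Equiv.Perm (Fin n)) (x : Pt n) : idx (Sum.map σ σ x) = σ (idx x) := by
  cases x <;> rfl

theorem conj_ebar (σ : Equiv.Perm (Fin n)) (i : Fin n) :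
    permRP σ * ebar (σ i) * permRP σ⁻¹ = ebar i := by
  refine rp_ext fun x y => ?_
  rw [conj_rel]
  have hinj : Function.Injective (Sum.map σ σ) := σ.injective.sumMap σ.injective
  simp [ebar, idx_map, hinj.eq_iff]

theorem conj_obar (σ : Equiv.Perm (Fin n)) (i : Fin n) :
    permRP σ * obar (σ i) * permRP σ⁻¹ = obar i := by
  refine rp_ext fun x y => ?_
  rw [conj_rel]
  simp [obar, obarS, idx_map]

theorem conj_tbar (σ : Equiv.Perm (Fin n)) (i j : Fin n) :
    permRP σ * tbar (σ i) (σ j) * permRP σ⁻¹ = tbar i j := by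
  refine rp_ext fun x y => ?_
  rw [conj_rel]
  simp [tbar, idx_map]

theorem exists_perm_pair {i j a b : Fin n} (hij : i ≠ j) (hab : a ≠ b) :
    ∃ σ : Equiv.Perm (Fin n), σ i = a ∧ σ j = b := by
  refine ⟨Equiv.swap (Equiv.swap i a j) b * Equiv.swap i a, ?_, by simp⟩
  have h : a ≠ Equiv.swap i a j := fun h => hij <| (Equiv.swap i a).injective <| by
    rw [← h, Equiv.swap_apply_left]
  simp [Equiv.swap_apply_of_ne_of_ne h hab]

/-- A dotless partition without same-side relations is obtained from a permutation by
isolating points. -/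
theorem mem_of_partial {N : RP n → Prop} (hperm : ∀ σ, N (permRP σ))
    (hiso : ∀ x α, N α → N (iso x α)) (α : RP n) (hd : α.NoDots)
    (hu : ∀ i j, α.rel (Sum.inl i) (Sum.inl j) → i = j)
    (hl : ∀ i j, α.rel (Sum.inr i) (Sum.inr j) → i = j) : N α := by
  induction hk : {i | ∀ j, ¬ α.rel (Sum.inl i) (Sum.inr j)}.ncard using Nat.strong_induction_on
    generalizing α with
  | _ k ih =>
  subst hk
  by_cases hC : TopBlock α
  · obtain ⟨i, -, hi⟩ := hC
    -- counting: an unmatched upper point forces an unmatched lower point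
    obtain ⟨j, hj⟩ : ∃ j, ∀ k, ¬ α.rel (Sum.inl k) (Sum.inr j) := by
      by_contra hcon
      push Not at hcon
      choose g hg using hcon
      have hgi : Function.Injective g := fun p q h =>
        hl p q (α.trans (α.symm (hg p)) (h ▸ hg q))
      obtain ⟨p, rfl⟩ := Finite.surjective_of_injective hgi i
      exact hi p (hg p)
    have h1 : ∀ a, α.rel (Sum.inl i) a ↔ a = Sum.inl i := by
      rintro (a | a)
      · exact ⟨fun h => by rw [hu _ _ h], fun h => h ▸ hd _⟩
      · exact iff_of_false (hi a) Sum.inr_ne_inl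
    have h2 : ∀ a, α.rel (Sum.inr j) a ↔ a = Sum.inr j := by
      rintro (a | a)
      · exact iff_of_false (fun h => hj a (α.symm h)) Sum.inl_ne_inr
      · exact ⟨fun h => by rw [hl _ _ h], fun h => h ▸ hd _⟩
    have hm : ∀ a b, (merge (Sum.inl i) (Sum.inr j) α).rel a b ↔ α.rel a b ∨
        ((a = Sum.inl i ∨ a = Sum.inr j) ∧ (b = Sum.inl i ∨ b = Sum.inr j)) := by
      intro a b
      simp only [merge, h1, h2]
    have hα : α = iso (Sum.inl i) (merge (Sum.inl i) (Sum.inr j) α) := by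
      refine rp_ext fun a b => ?_
      change _ ↔ (_ ∧ _) ∨ (_ ∧ _ ∧ _)
      rw [hm]
      have h1' : ∀ a, α.rel a (Sum.inl i) ↔ a = Sum.inl i := fun a =>
        ⟨fun h => (h1 a).1 (α.symm h), fun h => h ▸ hd _⟩
      by_cases ha : a = Sum.inl i
      · subst ha
        simp [h1]
      · by_cases hb : b = Sum.inl i
        · subst hb
          simp [h1', ha]
        · simp only [ha, hb, false_and, false_or, not_false_eq_true, true_and, ne_eq]
          constructor
          · exact .inl
          · rintro (h | ⟨rfl, rfl⟩)
            · exact h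
            · exact hd _
    rw [hα]
    refine hiso _ _ (ih _ ?_ _ (fun x => (hm x x).2 (.inl (hd x))) ?_ ?_ rfl)
    · refine Set.ncard_lt_ncard ?_ (Set.toFinite _)
      refine ⟨fun k hk l h => hk l ((hm _ _).2 (.inl h)), fun hsub => ?_⟩
      exact hsub hi j ((hm _ _).2 (.inr ⟨.inl rfl, .inr rfl⟩))
    · intro a b h
      rcases (hm _ _).1 h with h | ⟨h, h'⟩
      · exact hu a b h
      · simp only [Sum.inl.injEq, reduceCtorEq, or_false] at h h'
        rw [h, h']
    · intro a b h
      rcases (hm _ _).1 h with h | ⟨h, h'⟩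
      · exact hl a b h
      · simp only [Sum.inr.injEq, reduceCtorEq, false_or] at h h'
        rw [h, h']
  · obtain ⟨σ, rfl⟩ := isPermDiag_of_no_defect (fun ⟨i, h⟩ => h (hd _))
      (by rintro ⟨i, j, hij, h | h⟩
          · exact hij (hu i j h)
          · exact h.1 (hd _)) hC
    exact hperm σ

/-- Every dotless partition arises by same-side merges from one without same-side relations. -/
theorem mem_of_noDots {N : RP n → Prop} (hperm : ∀ σ, N (permRP σ))
    (hiso : ∀ x α, N α → N (iso x α))
    (hmu : ∀ i j α, i ≠ j → α.NoDots → N α → N (merge (Sum.inl i) (Sum.inl j) α))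
    (hml : ∀ i j α, i ≠ j → α.NoDots → N α → N (merge (Sum.inr i) (Sum.inr j) α))
    (α : RP n) (hd : α.NoDots) : N α := by
  induction hk : {p : Pt n × Pt n | α.rel p.1 p.2}.ncard using Nat.strong_induction_on
    generalizing α with
  | _ k ih =>
  subst hk
  have hnd : ∀ y, (iso y α).NoDots := fun y x => by
    by_cases hx : x = y
    · exact .inl ⟨hx, hx⟩
    · exact .inr ⟨hx, hx, hd x⟩
  have hN : ∀ x y, x ≠ y → α.rel x y → N (iso y α) := by
    intro x y hxy h
    refine ih _ ?_ _ (hnd y) rfl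
    refine Set.ncard_lt_ncard ⟨?_, fun hsub => ?_⟩ (Set.toFinite _)
    · rintro ⟨a, b⟩ (⟨h, h'⟩ | h)
      · change a = y at h
        change b = y at h'
        change α.rel a b
        rw [h, h']
        exact hd _
      · exact h.2.2
    · rcases @hsub (x, y) h with h | h
      · exact hxy h.1
      · exact h.2.1 rfl
  have hα : ∀ x y, x ≠ y → α.rel x y → α = merge x y (iso y α) := by
    intro x y hxy h
    have h1 : ∀ a, (iso y α).rel x a ∨ (iso y α).rel y a ↔ α.rel x a := by
      intro a
      by_cases ha : a = y
      · subst ha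
        exact iff_of_true (.inr (.inl ⟨rfl, rfl⟩)) h
      · simp [iso, hxy, ha]
    refine rp_ext fun a b => ?_
    change _ ↔ _ ∨ (_ ∧ _)
    rw [h1, h1]
    constructor
    · intro hab
      by_cases ha : a = y
      · subst ha
        exact .inr ⟨h, α.trans h hab⟩
      · by_cases hb : b = y
        · subst hb
          exact .inr ⟨α.trans h (α.symm hab), h⟩
        · exact .inl (.inr ⟨ha, hb, hab⟩)
    · rintro ((⟨rfl, rfl⟩ | hab) | ⟨ha, hb⟩)
      · exact hd _
      · exact hab.2.2
      · exact α.trans (α.symm ha) hb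
  by_cases hu : ∀ i j, α.rel (Sum.inl i) (Sum.inl j) → i = j
  · by_cases hl : ∀ i j, α.rel (Sum.inr i) (Sum.inr j) → i = j
    · exact mem_of_partial hperm hiso α hd hu hl
    · push Not at hl
      obtain ⟨i, j, h, hij⟩ := hl
      have hij' : (Sum.inr i : Pt n) ≠ Sum.inr j := fun h => hij (Sum.inr.inj h)
      rw [hα _ _ hij' h]
      exact hml i j _ hij (hnd _) (hN _ _ hij' h)
  · push Not at hu
    obtain ⟨i, j, h, hij⟩ := hu
    have hij' : (Sum.inl i : Pt n) ≠ Sum.inl j := fun h => hij (Sum.inl.inj h)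
    rw [hα _ _ hij' h]
    exact hmu i j _ hij (hnd _) (hN _ _ hij' h)

/-- Every rook partition arises from a dotless one by killing singleton blocks. -/
theorem mem_of_ops {N : RP n → Prop} (hperm : ∀ σ, N (permRP σ))
    (hiso : ∀ x α, N α → N (iso x α))
    (hmu : ∀ i j α, i ≠ j → α.NoDots → N α → N (merge (Sum.inl i) (Sum.inl j) α))
    (hml : ∀ i j α, i ≠ j → α.NoDots → N α → N (merge (Sum.inr i) (Sum.inr j) α))
    (hkill : ∀ x α, α.rel x x → N α → N (kill x α)) (α : RP n) : N α := by
  induction hk : {x | ¬ α.rel x x}.ncard using Nat.strong_induction_on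
    generalizing α with
  | _ k ih =>
  subst hk
  by_cases hd : α.NoDots
  · exact mem_of_noDots hperm hiso hmu hml α hd
  · have hd' : ∃ x, ¬ α.rel x x := by
      by_contra h
      push Not at h
      exact hd h
    obtain ⟨x, hx⟩ := hd'
    have hx1 : ∀ a, ¬ α.rel x a := fun a h => hx (α.trans h (α.symm h))
    have hα : α = kill x (iso x α) := by
      refine rp_ext fun a b => ?_
      change _ ↔ ((_ ∧ _) ∨ (_ ∧ _ ∧ _)) ∧ ¬ ((_ ∧ _) ∨ (_ ∧ _ ∧ _))
      constructor
      · intro h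
        have ha : a ≠ x := fun e => hx1 b (e ▸ h)
        have hb : b ≠ x := fun e => hx1 a (e ▸ α.symm h)
        exact ⟨.inr ⟨ha, hb, h⟩, by simp [ha]⟩
      · rintro ⟨⟨rfl, rfl⟩ | h, h'⟩
        · exact absurd (.inl ⟨rfl, rfl⟩) h'
        · exact h.2.2
    rw [hα]
    refine hkill _ _ (.inl ⟨rfl, rfl⟩) (ih _ ?_ _ rfl)
    refine Set.ncard_lt_ncard ⟨fun a ha h => ha ?_, fun hsub => ?_⟩ (Set.toFinite _)
    · exact .inr ⟨fun e => hx1 _ (e ▸ h), fun e => hx1 _ (e ▸ h), h⟩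
    · exact hsub hx (.inl ⟨rfl, rfl⟩)

theorem monGen_all {G : Set (RP n)} {a b : Fin n} (hab : a ≠ b)
    (ho : obar a ∈ G) (ht : tbar a b ∈ G) (he : ebar a ∈ G)
    (hperm : ∀ σ, MonGen G (permRP σ)) (α : RP n) : MonGen G α := by
  have he' : ∀ i, MonGen G (ebar i) := fun i => by
    rw [← conj_ebar (Equiv.swap i a) i, Equiv.swap_apply_left]
    exact .mul (.mul (hperm _) (.incl he)) (hperm _)
  have ho' : ∀ i, MonGen G (obar i) := fun i => by
    rw [← conj_obar (Equiv.swap i a) i, Equiv.swap_apply_left]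
    exact .mul (.mul (hperm _) (.incl ho)) (hperm _)
  have ht' : ∀ i j, i ≠ j → MonGen G (tbar i j) := fun i j hij => by
    obtain ⟨σ, h1, h2⟩ := exists_perm_pair hij hab
    rw [← conj_tbar σ i j, h1, h2]
    exact .mul (.mul (hperm _) (.incl ht)) (hperm _)
  refine mem_of_ops hperm ?_ ?_ ?_ ?_ α
  · rintro (i | i) α h
    · rw [← ebar_mul]
      exact .mul (he' i) h
    · rw [← mul_ebar]
      exact .mul h (he' i)
  · intro i j α hij hd h
    rw [← tbar_mul _ _ _ hd]
    exact .mul (ht' i j hij) h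
  · intro i j α hij hd h
    rw [← mul_tbar _ _ _ hd]
    exact .mul h (ht' i j hij)
  · rintro (i | i) α hi h
    · rw [← obar_mul _ _ hi]
      exact .mul (ho' i) h
    · rw [← mul_obar _ _ hi]
      exact .mul h (ho' i)

theorem monGen_perm {G : Set (RP n)} {S : Set (Equiv.Perm (Fin n))}
    (hS : Subgroup.closure S = ⊤) (hG : ∀ σ ∈ S, permRP σ ∈ G) (σ : Equiv.Perm (Fin n)) :
    MonGen G (permRP σ) := by
  have hσ : σ ∈ Submonoid.closure S := by
    rw [← Subgroup.closure_toSubmonoid_of_finite, hS]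
    trivial
  induction hσ using Submonoid.closure_induction with
  | mem x hx => exact .incl (hG x hx)
  | one => rw [permRP_one]; exact .one
  | mul x y _ _ hx hy => rw [← perm_mul_perm]; exact .mul hy hx

theorem exists_five (m : ℕ) : ∃ G : Set (RP (m + 3)), G.ncard = 5 ∧ ∀ α, MonGen G α := by
  have h01 : (0 : Fin (m + 3)) ≠ 1 := by simp
  have hrot : (finRotate (m + 3)) 0 = 1 := by simp
  refine ⟨{obar 0, tbar 0 1, ebar 0, permRP (finRotate (m + 3)), permRP (Equiv.swap 0 1)},
    ncard_five (obar_defects 0) (tbar_defects h01) (ebar_defects 0) ?_, ?_⟩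
  · intro h
    have h1 := congrArg (fun τ : Equiv.Perm (Fin (m + 3)) => τ 1) h
    simp [Fin.ext_iff, Fin.val_add] at h1
    rw [Nat.mod_eq_of_lt (by omega)] at h1
    omega
  · refine monGen_all h01 (by simp) (by simp) (by simp) ?_
    refine monGen_perm (Equiv.Perm.closure_cycle_adjacent_swap
      (isCycle_finRotate (n := m + 1)) (support_finRotate (n := m + 1)) 0) ?_
    rintro σ (rfl | rfl)
    · simp
    · rw [hrot]
      simp

end Generation

/-- for `n ≥ 3`, `rank(RP_n) = 5`: there is a generating set of the
monoid `RP_n` of size 5, and every generating set has at least 5 elements. -/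
theorem stmt19 (n : ℕ) (hn : 3 ≤ n) :
    (∃ G : Set (RP n), G.ncard = 5 ∧ ∀ α : RP n, MonGen G α) ∧
    (∀ G : Set (RP n), (∀ α : RP n, MonGen G α) → 5 ≤ G.ncard) := by
  refine ⟨?_, five_le_ncard hn⟩
  obtain ⟨m, rfl⟩ : ∃ m, n = m + 3 := ⟨n - 3, by omega⟩
  exact exists_five m

end RookPaper
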